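/- For each Dyck path λ of order n and each linear extension σ ∈ L(P_λ), the art statistic of DTS(λ,σ) equals the number of inversions of σ: art(DTS(λ,σ)) = inv(σ). -/

import Mathlib

open Finset

noncomputable section

/-- A Dyck path of order `n`: a word of `2n` steps (`true` = up-step `(+1,+1)`,
`false` = down-step `(+1,-1)`) from `(-n,0)` to `(n,0)` staying weakly above the x-axis. -/
structure DyckPath (n : ℕ) where
  step : Fin (2 * n) → Bool
  balanced : (Finset.univ.filter fun i => step i = true).card = n
  nonneg : ∀ k : ℕ, k ≤ 2 * n →
    (Finset.univ.filter fun i : Fin (2 * n) => (i : ℕ) < k ∧ step i = false).card ≤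
      (Finset.univ.filter fun i : Fin (2 * n) => (i : ℕ) < k ∧ step i = true).card

namespace DyckPath

/-- Height of the path above column `x` (columns run from `-n` to `n`). -/
def ht {n : ℕ} (P : DyckPath n) (x : ℤ) : ℤ :=
  ((Finset.univ.filter fun i : Fin (2 * n) => ((i : ℕ) : ℤ) < x + n ∧ P.step i = true).card : ℤ) -
    ((Finset.univ.filter fun i : Fin (2 * n) => ((i : ℕ) : ℤ) < x + n ∧ P.step i = false).card : ℤ)

/-- Height of the path at lattice point number `k`, `0 ≤ k ≤ 2n`
(point `k` lies at column `k - n`). -/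
def pt {n : ℕ} (P : DyckPath n) (k : ℕ) : ℤ := P.ht ((k : ℤ) - n)

end DyckPath

/-- `IsChord P p q`: the up-step at (0-indexed) position `p` matches the down-step at
position `q`, forming a chord of `P`. -/
def IsChord {n : ℕ} (P : DyckPath n) (p q : ℕ) : Prop :=
  p < q ∧ q < 2 * n ∧
    (∃ hp : p < 2 * n, P.step ⟨p, hp⟩ = true) ∧
    (∃ hq : q < 2 * n, P.step ⟨q, hq⟩ = false) ∧
    P.pt (q + 1) = P.pt p ∧
    ∀ m : ℕ, p < m → m ≤ q → P.pt p < P.pt m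

/-- A natural labeling of the chord poset of `P`: the chord labeled `i` has its up-step at
(0-indexed) position `l i` and matching down-step at position `r i`; distinct labels name
distinct chords; and if one chord is nested inside another it receives a larger label. -/
structure ChordLabeling {n : ℕ} (P : DyckPath n) where
  l : Fin n → ℕ
  r : Fin n → ℕ
  chord : ∀ i, IsChord P (l i) (r i)
  inj : Function.Injective l
  natural : ∀ i j : Fin n, l j < l i → r i < r j → j < i

/-- The length of the chord labeled `i`: the number of up steps of `P` between and
including its two endpoints. -/
def chordLen {n : ℕ} {P : DyckPath n} (C : ChordLabeling P) (i : Fin n) : ℕ :=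
  (Finset.univ.filter fun m : Fin (2 * n) =>
    C.l i ≤ (m : ℕ) ∧ (m : ℕ) ≤ C.r i ∧ P.step m = true).card

/-- The growth sequence `p_1, …, p_n` associated with a natural chord labeling:
`p i = #{j<i : l j < l i} + #{j<i : r j < l i}`. -/
def seqOf {n : ℕ} {P : DyckPath n} (C : ChordLabeling P) (i : Fin n) : ℕ :=
  (Finset.univ.filter fun j : Fin n => j < i ∧ C.l j < C.l i).card +
    (Finset.univ.filter fun j : Fin n => j < i ∧ C.r j < C.l i).card

/-- `σ` is the standardization of the word `w` (with distinct letters). -/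
def IsStandardization {n : ℕ} (w : Fin n → ℕ) (σ : Equiv.Perm (Fin n)) : Prop :=
  ∀ i j : Fin n, σ i < σ j ↔ w i < w j

/-- `σ ∈ 𝓛(P_λ)`: σ is `L₀ ∘ L⁻¹` for some natural labeling `L` of the chord poset,
equivalently the standardization of the word of left endpoints of a natural labeling. -/
def LinExt {n : ℕ} (P : DyckPath n) (σ : Equiv.Perm (Fin n)) : Prop :=
  ∃ C : ChordLabeling P, IsStandardization C.l σ

/-- Successor index in `Fin n` (used only under the guard `i+1 < n`). -/
def nextIdx {n : ℕ} (i : Fin n) : Fin n := ⟨((i : ℕ) + 1) % n, Nat.mod_lt _ i.pos⟩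

/-- Descent set of a word: positions `i` with `i+1 < n` and `w i > w (i+1)`. -/
def descentFinset {n : ℕ} (w : Fin n → ℕ) : Finset (Fin n) :=
  Finset.univ.filter fun i => (i : ℕ) + 1 < n ∧ w (nextIdx i) < w i

/-- Number of inversions of a word. -/
def wordInv {n : ℕ} (w : Fin n → ℕ) : ℕ :=
  (Finset.univ.filter fun p : Fin n × Fin n => p.1 < p.2 ∧ w p.2 < w p.1).card

/-- The word of values of a permutation. -/
def permWord {n : ℕ} (σ : Equiv.Perm (Fin n)) : Fin n → ℕ := fun i => (σ i : ℕ)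

/-- inv(σ). -/
def permInv {n : ℕ} (σ : Equiv.Perm (Fin n)) : ℕ := wordInv (permWord σ)

/-- des(σ). -/
def permDes {n : ℕ} (σ : Equiv.Perm (Fin n)) : ℕ := (descentFinset (permWord σ)).card

/-- `REM_i(w) = {k > i : w i > w k > w (i+1)}`, the right embraced numbers. -/
def remSet {n : ℕ} (w : Fin n → ℕ) (i : Fin n) : Finset (Fin n) :=
  Finset.univ.filter fun k => i < k ∧ w (nextIdx i) < w k ∧ w k < w i

/-- desdif(σ) = Σ_{i ∈ DES σ} (σ i − σ (i+1)). -/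
def desdif {n : ℕ} (σ : Equiv.Perm (Fin n)) : ℕ :=
  ∑ i ∈ descentFinset (permWord σ), (permWord σ i - permWord σ (nextIdx i))

/-- res(σ) = Σ_{i ∈ DES σ} #{k < i : σ i > σ k > σ (i+1)}. -/
def resStat {n : ℕ} (σ : Equiv.Perm (Fin n)) : ℕ :=
  ∑ i ∈ descentFinset (permWord σ),
    (Finset.univ.filter fun k : Fin n =>
      k < i ∧ permWord σ (nextIdx i) < permWord σ k ∧ permWord σ k < permWord σ i).card

/-- The Mahonian statistic mad(σ) = desdif(σ) + res(σ). -/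
def mad {n : ℕ} (σ : Equiv.Perm (Fin n)) : ℕ := desdif σ + resStat σ

/-- σ avoids the pattern 231. -/
def Avoids231 {n : ℕ} (σ : Equiv.Perm (Fin n)) : Prop :=
  ¬∃ i j k : Fin n, i < j ∧ j < k ∧ σ k < σ i ∧ σ i < σ j

/-- The boxes of the skew shape `lam/mu` (with `mu` weakly above `lam`), each box
recorded by its bottom corner (a lattice point `(x, z)` with `z ≡ x + n (mod 2)`). -/
def skewCells {n : ℕ} (lam mu : DyckPath n) : Finset (ℤ × ℤ) :=
  ((Finset.Icc (-(n : ℤ)) n) ×ˢ (Finset.Icc (0 : ℤ) n)).filter fun c =>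
    lam.ht c.1 ≤ c.2 ∧ c.2 + 2 ≤ mu.ht c.1 ∧ (c.2 - c.1 - n) % 2 = 0

/-- A Dyck tile, recorded by the set of bottom corners of its boxes: these form
a Dyck-path shape, i.e. a ±1-step lattice path whose two ends are lowest. -/
def IsDyckTile (t : Finset (ℤ × ℤ)) : Prop :=
  ∃ (a b : ℤ) (f : ℤ → ℤ), a ≤ b ∧
    (∀ x : ℤ, a ≤ x → x < b → f (x + 1) = f x + 1 ∨ f (x + 1) = f x - 1) ∧
    f b = f a ∧ (∀ x : ℤ, a ≤ x → x ≤ b → f a ≤ f x) ∧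
    t = (Finset.Icc a b).image fun x => (x, f x)

/-- A Dyck tiling of order `n`: a tiling of the skew shape between two Dyck paths of
order `n` by Dyck tiles. -/
structure DyckTiling (n : ℕ) where
  lower : DyckPath n
  upper : DyckPath n
  below : ∀ x : ℤ, lower.ht x ≤ upper.ht x
  tiles : Finset (Finset (ℤ × ℤ))
  isDyck : ∀ t ∈ tiles, IsDyckTile t
  disj : ∀ t ∈ tiles, ∀ u ∈ tiles, t ≠ u → Disjoint t u
  cover : tiles.biUnion id = skewCells lower upper

namespace DyckTiling

/-- Number of boxes of the skew shape. -/
def area {n : ℕ} (T : DyckTiling n) : ℕ := (skewCells T.lower T.upper).card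

/-- Number of tiles. -/
def numTiles {n : ℕ} (T : DyckTiling n) : ℕ := T.tiles.card

/-- art(T) = (area(T) + tiles(T)) / 2. -/
def art {n : ℕ} (T : DyckTiling n) : ℕ := (T.area + T.numTiles) / 2

/-- dis(T): the number of step positions where the lower path steps down while the
upper path steps up. -/
def dis {n : ℕ} (T : DyckTiling n) : ℕ :=
  (Finset.univ.filter fun i : Fin (2 * n) =>
    T.lower.step i = false ∧ T.upper.step i = true).card

/-- Cover-inclusiveness: whenever a tile has a box strictly above a box of another tile,
its horizontal extent is contained in that of the other tile. -/
def CoverInclusive {n : ℕ} (T : DyckTiling n) : Prop :=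
  ∀ t ∈ T.tiles, ∀ u ∈ T.tiles,
    (∃ p ∈ t, ∃ q ∈ u, (p : ℤ × ℤ).1 = (q : ℤ × ℤ).1 ∧ (q : ℤ × ℤ).2 < (p : ℤ × ℤ).2) →
    ∀ p ∈ t, ∃ y : ℤ, ((p : ℤ × ℤ).1, y) ∈ u

end DyckTiling

/-- Height function of the spread at column `s` of a Dyck path. -/
def spreadHt {n : ℕ} (P : DyckPath n) (s x : ℤ) : ℤ :=
  if x < s then P.ht (x + 1) else if x = s then P.ht s + 1 else P.ht (x - 1)

/-- Spread of a tile at column `s`: points left of `s` move left, points right of `s`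
move right, and a point at column `s` is duplicated upward. -/
def spreadTile (s : ℤ) (t : Finset (ℤ × ℤ)) : Finset (ℤ × ℤ) :=
  ((t.filter fun p => p.1 ≤ s).image fun p => (p.1 - 1, p.2)) ∪
    ((t.filter fun p => p.1 = s).image fun p => (p.1, p.2 + 1)) ∪
    ((t.filter fun p => s ≤ p.1).image fun p => (p.1 + 1, p.2))

/-- Spread of a set of tiles at column `s`. -/
def spreadTiles (s : ℤ) (ts : Finset (Finset (ℤ × ℤ))) : Finset (Finset (ℤ × ℤ)) :=
  ts.image (spreadTile s)

/-- Column `c` is eligible for a tiling with upper-boundary height function `h` and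
tile set `ts`: the upper boundary has an up step ending at column `c`, and its point at
column `c` is not the top corner of a one-box tile. -/
def EligibleCol (h : ℤ → ℤ) (ts : Finset (Finset (ℤ × ℤ))) (c : ℤ) : Prop :=
  h c = h (c - 1) + 1 ∧ ({(c, h c - 2)} : Finset (ℤ × ℤ)) ∉ ts

/-- `T'` is the result of the strip-grow map applied to `(T, s)`: spread `T` at `s` and
add a one-box tile on each up step of the (spread) upper boundary starting at a column
`≥ s` (i.e. strictly to the right of column `s`). -/
def StripGrowRel {n : ℕ} (T : DyckTiling n) (s : ℤ) (T' : DyckTiling (n + 1)) : Prop :=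
  (∀ x : ℤ, T'.lower.ht x = spreadHt T.lower s x) ∧
  (∀ x : ℤ, T'.upper.ht x =
    if s ≤ x ∧ spreadHt T.upper s (x + 1) = spreadHt T.upper s x + 1 then
      spreadHt T.upper s x + 2
    else spreadHt T.upper s x) ∧
  T'.tiles = spreadTiles s T.tiles ∪
    ((Finset.Icc s (n : ℤ)).filter fun x =>
        spreadHt T.upper s (x + 1) = spreadHt T.upper s x + 1).image
      (fun x => ({(x, spreadHt T.upper s x)} : Finset (ℤ × ℤ)))

/-- `T'` is the result of the ribbon-grow map applied to `(T, s)`: spread `T` at `s`,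
and if the special column `Q` of the spread tiling is strictly right of `s`, add a
ribbon of one-box tiles at all columns strictly between `s` and `Q`. -/
def RibbonGrowRel {n : ℕ} (T : DyckTiling n) (s : ℤ) (T' : DyckTiling (n + 1)) : Prop :=
  (∀ x : ℤ, T'.lower.ht x = spreadHt T.lower s x) ∧
  ∃ Q : ℤ,
    EligibleCol (spreadHt T.upper s) (spreadTiles s T.tiles) Q ∧
    (∀ c : ℤ, EligibleCol (spreadHt T.upper s) (spreadTiles s T.tiles) c → c ≤ Q) ∧
    (∀ x : ℤ, T'.upper.ht x =
      if s < x ∧ x < Q then spreadHt T.upper s x + 2 else spreadHt T.upper s x) ∧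
    T'.tiles = spreadTiles s T.tiles ∪
      (Finset.Ioo s Q).image (fun x => ({(x, spreadHt T.upper s x)} : Finset (ℤ × ℤ)))

/-- `s` is the special column of `T`: its rightmost eligible column. -/
def SpecialCol {n : ℕ} (T : DyckTiling n) (s : ℤ) : Prop :=
  EligibleCol T.upper.ht T.tiles s ∧ ∀ c : ℤ, EligibleCol T.upper.ht T.tiles c → c ≤ s

/-- In the strip-shrink map applied to `T'` with special column `s`, a one-box tile is
removed at column `x`: `x` is right of `s` and there is a one-box tile there that is
part of an up step of the upper boundary. -/
def StripRemovedAt {n : ℕ} (T' : DyckTiling n) (s x : ℤ) : Prop :=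
  s < x ∧ T'.upper.ht x = T'.upper.ht (x - 1) + 1 ∧
    ({(x, T'.upper.ht x - 2)} : Finset (ℤ × ℤ)) ∈ T'.tiles

instance {n : ℕ} (T' : DyckTiling n) (s x : ℤ) : Decidable (StripRemovedAt T' s x) := by
  unfold StripRemovedAt; infer_instance

/-- `(T, s)` is the result of the strip-shrink map applied to `T'`: `s` is the special
column of `T'`; all one-box tiles right of `s` lying on up steps of the upper boundary
are removed; and the result is the spread of `T` at `s`. -/
def StripShrinkRel {n : ℕ} (T' : DyckTiling (n + 1)) (T : DyckTiling n) (s : ℤ) : Prop :=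
  SpecialCol T' s ∧
  (∀ x : ℤ, spreadHt T.lower s x = T'.lower.ht x) ∧
  (∀ x : ℤ, spreadHt T.upper s x =
    if StripRemovedAt T' s x then T'.upper.ht x - 2 else T'.upper.ht x) ∧
  spreadTiles s T.tiles =
    T'.tiles \ (((Finset.Ioc s ((n : ℤ) + 1)).filter fun x => StripRemovedAt T' s x).image
      fun x => ({(x, T'.upper.ht x - 2)} : Finset (ℤ × ℤ)))

/-- `(T, s)` is the result of the ribbon-shrink map applied to `T'`: `s` is the special
column of `T'`; the maximal run of topmost one-box tiles in columns `s+1, s+2, …` is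
removed; and the result is the spread of `T` at `s`. -/
def RibbonShrinkRel {n : ℕ} (T' : DyckTiling (n + 1)) (T : DyckTiling n) (s : ℤ) : Prop :=
  SpecialCol T' s ∧
  ∃ r : ℤ, s < r ∧
    (∀ x : ℤ, s < x → x < r → ({(x, T'.upper.ht x - 2)} : Finset (ℤ × ℤ)) ∈ T'.tiles) ∧
    ({(r, T'.upper.ht r - 2)} : Finset (ℤ × ℤ)) ∉ T'.tiles ∧
    (∀ x : ℤ, spreadHt T.lower s x = T'.lower.ht x) ∧
    (∀ x : ℤ, spreadHt T.upper s x =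
      if s < x ∧ x < r then T'.upper.ht x - 2 else T'.upper.ht x) ∧
    spreadTiles s T.tiles =
      T'.tiles \ ((Finset.Ioo s r).image fun x => ({(x, T'.upper.ht x - 2)} : Finset (ℤ × ℤ)))

/-- `IsDTS n p T`: `T` is the Dyck tiling `DTS(p_1, …, p_n)` (indices 0-based, so the
growth column for step `i` is `p i - i`). -/
inductive IsDTS : (n : ℕ) → (Fin n → ℕ) → DyckTiling n → Prop where
  | nil (p : Fin 0 → ℕ) (T : DyckTiling 0) : IsDTS 0 p T
  | cons (n : ℕ) (p : Fin (n + 1) → ℕ) (T : DyckTiling n) (T' : DyckTiling (n + 1)) :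
      IsDTS n (fun i => p i.castSucc) T →
      StripGrowRel T ((p (Fin.last n) : ℤ) - n) T' → IsDTS (n + 1) p T'

/-- `IsDTR n p T`: `T` is the Dyck tiling `DTR(p_1, …, p_n)`. -/
inductive IsDTR : (n : ℕ) → (Fin n → ℕ) → DyckTiling n → Prop where
  | nil (p : Fin 0 → ℕ) (T : DyckTiling 0) : IsDTR 0 p T
  | cons (n : ℕ) (p : Fin (n + 1) → ℕ) (T : DyckTiling n) (T' : DyckTiling (n + 1)) :
      IsDTR n (fun i => p i.castSucc) T →
      RibbonGrowRel T ((p (Fin.last n) : ℤ) - n) T' → IsDTR (n + 1) p T'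

/-- `T = DTS(λ, σ)`. -/
def IsDTSof {n : ℕ} (lam : DyckPath n) (σ : Equiv.Perm (Fin n)) (T : DyckTiling n) : Prop :=
  ∃ C : ChordLabeling lam, IsStandardization C.l σ ∧ IsDTS n (seqOf C) T

/-- `T = DTR(λ, σ)`. -/
def IsDTRof {n : ℕ} (lam : DyckPath n) (σ : Equiv.Perm (Fin n)) (T : DyckTiling n) : Prop :=
  ∃ C : ChordLabeling lam, IsStandardization C.l σ ∧ IsDTR n (seqOf C) T

/-- Increment `a` if it exceeds `p`. -/
def bump (p a : ℕ) : ℕ := if p < a then a + 1 else a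

/-- The perfect matching `match(p_1, …, p_n)` of `{1, …, 2n}`. -/
def matchSeq : (n : ℕ) → (Fin n → ℕ) → Finset (ℕ × ℕ)
  | 0, _ => ∅
  | n + 1, p =>
    ((matchSeq n fun i => p i.castSucc).image fun q =>
      (bump (p (Fin.last n)) q.1, bump (p (Fin.last n)) q.2)) ∪
      {(p (Fin.last n) + 1, 2 * (n + 1))}

/-- The number of nestings of a matching: pairs `(a,b)`, `(c,d)` with `c < a < b < d`. -/
def nestings (M : Finset (ℕ × ℕ)) : ℕ :=
  ((M ×ˢ M).filter fun q => q.2.1 < q.1.1 ∧ q.1.1 < q.1.2 ∧ q.1.2 < q.2.2).card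

/-- `w` is the min-word of `M`: the list of the smaller elements of the pairs of `M`,
sorted by the larger elements. -/
def IsMinWord (n : ℕ) (M : Finset (ℕ × ℕ)) (w : Fin n → ℕ) : Prop :=
  ∃ b : Fin n → ℕ, StrictMono b ∧ (∀ i, w i < b i) ∧
    M = Finset.univ.image fun i => (w i, b i)

/-- The number of tiles of `T` containing boxes over both endpoint columns of the
chord with endpoints at step positions `p < q`. -/
def chordTileCount {n : ℕ} (T : DyckTiling n) (p q : ℕ) : ℕ :=
  (T.tiles.filter fun t =>
    (∃ c ∈ t, (c : ℤ × ℤ).1 = (p : ℤ) + 1 - n) ∧ (∃ c ∈ t, (c : ℤ × ℤ).1 = (q : ℤ) - n)).card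

/-- A Dyck tableau of order `n` over the zigzag path `Z` of order `n+1`: a skew shape
`Z/μ` with `n` dots, one in each column of the skew shape through a valley of `Z`. -/
structure DyckTableau (n : ℕ) (Z : DyckPath (n + 1)) where
  upper : DyckPath (n + 1)
  below : ∀ x : ℤ, Z.ht x ≤ upper.ht x
  dots : Finset (ℤ × ℤ)
  sub : dots ⊆ skewCells Z upper
  card_dots : dots.card = n
  valley : ∀ x : ℤ, Z.ht (x - 1) = Z.ht x + 1 → Z.ht (x + 1) = Z.ht x + 1 →
    (dots.filter fun c => c.1 = x).card = 1

/-- The `q`-integer `[m]_q = 1 + q + ⋯ + q^(m-1)` as a polynomial. -/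
def qint (m : ℕ) : Polynomial ℤ := ∑ i ∈ Finset.range m, Polynomial.X ^ i

/-- The `q`-factorial `[n]_q!`. -/
def qfact (n : ℕ) : Polynomial ℤ := ∏ i ∈ Finset.range n, qint (i + 1)


namespace DyckPath

variable {n : ℕ} (P : DyckPath n)

lemma ht_eq_sum (x : ℤ) : P.ht x =
    ∑ i : Fin (2 * n), if ((i : ℕ) : ℤ) < x + n then (if P.step i then (1 : ℤ) else -1) else 0 := by
  unfold ht
  rw [Finset.card_filter, Finset.card_filter]
  push_cast
  rw [← Finset.sum_sub_distrib]
  refine Finset.sum_congr rfl fun i _ => ?_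
  cases P.step i <;> split_ifs <;> simp_all

lemma ht_of_le_neg {x : ℤ} (hx : x ≤ -n) : P.ht x = 0 := by
  rw [ht_eq_sum]
  refine Finset.sum_eq_zero fun i _ => ?_
  rw [if_neg (by omega)]

lemma ht_of_ge {x : ℤ} (hx : n ≤ x) : P.ht x = 0 := by
  unfold ht
  have h : ∀ i : Fin (2 * n), ((i : ℕ) : ℤ) < x + n := fun i => by omega
  have hc := Finset.card_filter_add_card_filter_not (s := (Finset.univ : Finset (Fin (2 * n))))
    (fun i => P.step i = true)
  simp only [h, true_and]
  simp only [Bool.not_eq_true, P.balanced, Finset.card_univ, Fintype.card_fin] at hc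
  rw [P.balanced]
  omega

lemma ht_nonneg (x : ℤ) : 0 ≤ P.ht x := by
  rcases le_total x (-n) with h | h
  · rw [P.ht_of_le_neg h]
  rcases le_total x n with h' | h'
  · have := P.nonneg (x + n).toNat (by omega)
    have hx : ((x + n).toNat : ℤ) = x + n := by omega
    have hi : ∀ i : Fin (2 * n), (i : ℕ) < (x + n).toNat ↔ ((i : ℕ) : ℤ) < x + n := by
      intro i; omega
    simp only [hi] at this
    unfold ht
    omega
  · rw [P.ht_of_ge h']

lemma ht_le (x : ℤ) : P.ht x ≤ n := by
  have : (Finset.univ.filter fun i : Fin (2 * n) =>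
      ((i : ℕ) : ℤ) < x + n ∧ P.step i = true).card ≤ n := by
    refine le_trans (Finset.card_le_card fun i => ?_) P.balanced.le
    simp +contextual
  unfold ht
  omega

lemma ht_succ {x : ℤ} (h₁ : -n ≤ x) (h₂ : x < n) :
    P.ht (x + 1) = P.ht x + 1 ∨ P.ht (x + 1) = P.ht x - 1 := by
  have hlt : (x + n).toNat < 2 * n := by omega
  have key : P.ht (x + 1) - P.ht x = if P.step ⟨(x + n).toNat, hlt⟩ then (1 : ℤ) else -1 := by
    rw [ht_eq_sum, ht_eq_sum, ← Finset.sum_sub_distrib,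
      Finset.sum_eq_single (⟨(x + n).toNat, hlt⟩ : Fin (2 * n))]
    · have h₃ : ((x + n).toNat : ℤ) = x + n := by omega
      rw [if_pos (show ((x + n).toNat : ℤ) < x + 1 + n by omega),
        if_neg (show ¬ ((x + n).toNat : ℤ) < x + n by omega), sub_zero]
    · intro i _ hi
      have : (i : ℕ) ≠ (x + n).toNat := fun h => hi (Fin.ext h)
      by_cases h : ((i : ℕ) : ℤ) < x + n
      · rw [if_pos h, if_pos (by omega), sub_self]
      · rw [if_neg h, if_neg (by omega), sub_self]
    · simp
  split_ifs at key <;> omega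

lemma ht_parity {x : ℤ} (h₁ : -n ≤ x) (h₂ : x ≤ n) : (P.ht x - x - n) % 2 = 0 := by
  induction x, h₁ using Int.leInduction with
  | base => rw [P.ht_of_le_neg le_rfl]; omega
  | succ x hx ih =>
    have := ih (by omega)
    rcases P.ht_succ hx (by omega) with h | h <;> omega

end DyckPath

/-- The number of integers of the parity class of `a` in a half-open interval. -/
lemma two_mul_card_filter_parity {n a b c : ℤ} (ha : 0 ≤ a) (hab : a ≤ b) (hb : b ≤ n)
    (hac : (a - c) % 2 = 0) (hbc : (b - c) % 2 = 0) :
    2 * (((Finset.Icc 0 n).filter fun z => a ≤ z ∧ z + 2 ≤ b ∧ (z - c) % 2 = 0).card : ℤ)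
      = b - a := by
  have : ((Finset.Icc 0 n).filter fun z => a ≤ z ∧ z + 2 ≤ b ∧ (z - c) % 2 = 0) =
      (Finset.Ico 0 ((b - a) / 2)).image fun k => a + 2 * k := by
    ext z
    simp only [Finset.mem_filter, Finset.mem_Icc, Finset.mem_image, Finset.mem_Ico]
    constructor
    · rintro ⟨-, h₁, h₂, h₃⟩
      exact ⟨(z - a) / 2, by omega, by omega⟩
    · rintro ⟨k, hk, rfl⟩
      omega
  rw [this, Finset.card_image_of_injective _ (fun x y h => by simpa using h), Int.card_Ico]
  omega

lemma two_mul_card_skewCells {n : ℕ} (lam mu : DyckPath n) (h : ∀ x, lam.ht x ≤ mu.ht x) :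
    2 * ((skewCells lam mu).card : ℤ) =
      ∑ x ∈ Finset.Icc (-(n : ℤ)) n, (mu.ht x - lam.ht x) := by
  unfold skewCells
  rw [Finset.card_filter, Finset.sum_product]
  push_cast
  rw [Finset.mul_sum]
  refine Finset.sum_congr rfl fun x hx => ?_
  rw [Finset.mem_Icc] at hx
  have h₁ := lam.ht_parity hx.1 hx.2
  have h₂ := mu.ht_parity hx.1 hx.2
  rw [← two_mul_card_filter_parity (c := x + n) (lam.ht_nonneg x) (h x) (mu.ht_le x)
    (by omega) (by omega), Finset.card_filter]
  push_cast
  simp only [sub_sub]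

/-- The number of ascents of a `±1`-step function on an interval. -/
lemma two_mul_card_ascents (f : ℤ → ℤ) {a b : ℤ} (hab : a ≤ b)
    (hf : ∀ x, a ≤ x → x < b → f (x + 1) = f x + 1 ∨ f (x + 1) = f x - 1) :
    2 * (((Finset.Ico a b).filter fun x => f (x + 1) = f x + 1).card : ℤ) =
      b - a + f b - f a := by
  induction b, hab using Int.leInduction with
  | base => simp
  | succ b hb ih =>
    have h := ih fun x h₁ h₂ => hf x h₁ (by omega)
    have hI : Finset.Ico a (b + 1) = insert b (Finset.Ico a b) := by
      ext x; simp only [Finset.mem_Ico, Finset.mem_insert]; omega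
    rw [hI, Finset.filter_insert]
    rcases hf b hb (by omega) with h' | h'
    · rw [if_pos h', Finset.card_insert_of_notMem (by simp)]
      push_cast
      omega
    · rw [if_neg (by omega)]
      omega

lemma sum_spread (g : ℤ → ℤ) {a b s : ℤ} (has : a ≤ s) (hsb : s ≤ b) :
    ∑ x ∈ Finset.Icc (a - 1) (b + 1),
      (if x < s then g (x + 1) else if x = s then g s else g (x - 1)) =
      ∑ x ∈ Finset.Icc a b, g x + 2 * g s := by
  have split : Finset.Icc (a - 1) (b + 1) =
      (((Finset.Icc a s).image (· - 1)) ∪ {s}) ∪ (Finset.Icc s b).image (· + 1) := by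
    ext x
    simp only [Finset.mem_union, Finset.mem_image, Finset.mem_Icc, Finset.mem_singleton]
    constructor
    · intro h
      rcases lt_trichotomy x s with h' | h' | h'
      · exact .inl (.inl ⟨x + 1, by omega, by omega⟩)
      · exact .inl (.inr h')
      · exact .inr ⟨x - 1, by omega, by omega⟩
    · rintro ((⟨y, hy, rfl⟩ | rfl) | ⟨y, hy, rfl⟩) <;> omega
  have split' : Finset.Icc a b = Finset.Icc a s ∪ Finset.Ioc s b := by
    ext x; simp only [Finset.mem_union, Finset.mem_Icc, Finset.mem_Ioc]; omega
  have split'' : Finset.Icc s b = insert s (Finset.Ioc s b) := by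
    ext x; simp only [Finset.mem_insert, Finset.mem_Icc, Finset.mem_Ioc]; omega
  rw [split, Finset.sum_union, Finset.sum_union, Finset.sum_image (by simp),
    Finset.sum_image (by simp), split', Finset.sum_union, split'', Finset.sum_insert (by simp)]
  · have e₁ : ∀ x ∈ Finset.Icc a s, (if x - 1 < s then g (x - 1 + 1) else
        if x - 1 = s then g s else g (x - 1 - 1)) = g x := by
      intro x hx
      rw [Finset.mem_Icc] at hx
      rw [if_pos (by omega), sub_add_cancel]
    have e₂ : ∀ x ∈ Finset.Ioc s b, (if x + 1 < s then g (x + 1 + 1) else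
        if x + 1 = s then g s else g (x + 1 - 1)) = g x := by
      intro x hx
      rw [Finset.mem_Ioc] at hx
      rw [if_neg (by omega), if_neg (by omega), add_sub_cancel_right]
    rw [Finset.sum_congr rfl e₁, Finset.sum_congr rfl e₂]
    simp
    ring
  · rw [Finset.disjoint_left]
    intro x; simp only [Finset.mem_Icc, Finset.mem_Ioc]; omega
  · rw [Finset.disjoint_left]
    intro x
    simp only [Finset.mem_image, Finset.mem_Icc, Finset.mem_singleton]
    rintro ⟨y, hy, rfl⟩
    omega
  · rw [Finset.disjoint_left]
    intro x
    simp only [Finset.mem_union, Finset.mem_image, Finset.mem_Icc, Finset.mem_singleton]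
    rintro (⟨y, hy, rfl⟩ | rfl) ⟨z, hz, h⟩ <;> omega

lemma mem_spreadTile {s : ℤ} {t : Finset (ℤ × ℤ)} {x z : ℤ} :
    (x, z) ∈ spreadTile s t ↔
      (x < s ∧ (x + 1, z) ∈ t) ∨ (x = s ∧ (s, z - 1) ∈ t) ∨ (s < x ∧ (x - 1, z) ∈ t) := by
  simp only [spreadTile, Finset.mem_union, Finset.mem_image, Finset.mem_filter, Prod.exists,
    Prod.mk.injEq]
  constructor
  · rintro ((⟨a, b, ⟨h, h'⟩, rfl, rfl⟩ | ⟨a, b, ⟨h, h'⟩, rfl, rfl⟩) | ⟨a, b, ⟨h, h'⟩, rfl, rfl⟩)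
    · exact .inl ⟨by omega, by simpa using h⟩
    · exact .inr (.inl ⟨h', by simpa [← h'] using h⟩)
    · exact .inr (.inr ⟨by omega, by simpa using h⟩)
  · rintro (⟨h, h'⟩ | ⟨rfl, h'⟩ | ⟨h, h'⟩)
    · exact .inl (.inl ⟨_, _, ⟨h', by omega⟩, by omega, rfl⟩)
    · exact .inl (.inr ⟨_, _, ⟨h', rfl⟩, rfl, by omega⟩)
    · exact .inr ⟨_, _, ⟨h', by omega⟩, by omega, rfl⟩

lemma spreadTile_injective (s : ℤ) : Function.Injective (spreadTile s) := by
  intro t u h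
  ext ⟨x, z⟩
  rcases le_total x s with hx | hx
  · have := congrArg ((x - 1, z) ∈ ·) h
    simpa [mem_spreadTile, show ¬ x - 1 = s by omega, show ¬ s < x - 1 by omega,
      show x - 1 < s by omega] using this
  · have := congrArg ((x + 1, z) ∈ ·) h
    simpa [mem_spreadTile, show ¬ x + 1 = s by omega, show s < x + 1 by omega,
      show ¬ x + 1 < s by omega] using this

namespace StripGrowRel

variable {n : ℕ} {T : DyckTiling n} {T' : DyckTiling (n + 1)} {s : ℤ}

lemma two_mul_card_strip (hs₁ : -n ≤ s) (hs₂ : s ≤ n) (P : DyckPath n) :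
    2 * (((Finset.Icc s (n : ℤ)).filter fun x =>
        spreadHt P s (x + 1) = spreadHt P s x + 1).card : ℤ) = n - s - P.ht s := by
  have hI : Finset.Icc s (n : ℤ) = Finset.Ico s (n + 1) := by
    ext x; simp only [Finset.mem_Icc, Finset.mem_Ico]; omega
  rw [hI, two_mul_card_ascents _ (by omega)]
  · have h := P.ht_of_ge le_rfl
    simp only [spreadHt, show ¬ ((n : ℤ) + 1 < s) by omega, show ¬ ((n : ℤ) + 1 = s) by omega,
      if_false, lt_irrefl, if_true, add_sub_cancel_right, h]
    ring
  · intro x h₁ h₂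
    rcases eq_or_lt_of_le h₁ with rfl | h₁
    · simp [spreadHt]
    · have := P.ht_succ (x := x - 1) (by omega) (by omega)
      simp only [spreadHt, show ¬ (x + 1 < s) by omega, show ¬ (x + 1 = s) by omega,
        show ¬ (x < s) by omega, show ¬ (x = s) by omega, if_false, add_sub_cancel_right]
      simpa using this

lemma area_eq (h : StripGrowRel T s T') (hs₁ : -n ≤ s) (hs₂ : s ≤ n) :
    (T'.area : ℤ) = T.area + (T.upper.ht s - T.lower.ht s) +
      ((Finset.Icc s (n : ℤ)).filter fun x =>
        spreadHt T.upper s (x + 1) = spreadHt T.upper s x + 1).card := by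
  obtain ⟨hl, hu, -⟩ := h
  have h₁ := two_mul_card_skewCells T.lower T.upper T.below
  have h₂ := two_mul_card_skewCells T'.lower T'.upper T'.below
  have h₃ := sum_spread (fun x => T.upper.ht x - T.lower.ht x) hs₁ hs₂
  have hcol : ∀ x, T'.upper.ht x - T'.lower.ht x =
      (if x < s then T.upper.ht (x + 1) - T.lower.ht (x + 1) else
        if x = s then T.upper.ht s - T.lower.ht s else T.upper.ht (x - 1) - T.lower.ht (x - 1)) +
      2 * (if s ≤ x ∧ spreadHt T.upper s (x + 1) = spreadHt T.upper s x + 1 then 1 else 0) := by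
    intro x
    rw [hl, hu]
    have : spreadHt T.upper s x - spreadHt T.lower s x =
        (if x < s then T.upper.ht (x + 1) - T.lower.ht (x + 1) else
        if x = s then T.upper.ht s - T.lower.ht s
        else T.upper.ht (x - 1) - T.lower.ht (x - 1)) := by
      unfold spreadHt; split_ifs <;> ring
    rw [← this]
    split_ifs <;> ring
  have hset : ((Finset.Icc (-((n + 1 : ℕ) : ℤ)) ((n + 1 : ℕ) : ℤ)).filter fun x =>
      s ≤ x ∧ spreadHt T.upper s (x + 1) = spreadHt T.upper s x + 1) =
      (Finset.Icc s (n : ℤ)).filter fun x =>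
        spreadHt T.upper s (x + 1) = spreadHt T.upper s x + 1 := by
    ext x
    simp only [Finset.mem_filter, Finset.mem_Icc]
    refine ⟨fun ⟨h, h', h''⟩ => ⟨⟨h', ?_⟩, h''⟩, fun ⟨h, h'⟩ => ⟨by omega, h.1, h'⟩⟩
    by_contra hx
    have e₁ := T.upper.ht_of_ge (x := x) (by omega)
    have e₂ := T.upper.ht_of_ge (x := x - 1) (by omega)
    simp [spreadHt, show ¬ (x + 1 < s) by omega, show ¬ (x + 1 = s) by omega,
      show ¬ (x < s) by omega, show ¬ (x = s) by omega, e₁, e₂] at h''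
  rw [Finset.sum_congr rfl fun x _ => hcol x, Finset.sum_add_distrib, ← Finset.mul_sum,
    Finset.sum_boole, hset] at h₂
  rw [show (-((n + 1 : ℕ) : ℤ)) = -(n : ℤ) - 1 by push_cast; ring,
    show ((n + 1 : ℕ) : ℤ) = (n : ℤ) + 1 by push_cast; ring, h₃] at h₂
  unfold DyckTiling.area
  linarith

lemma numTiles_eq (h : StripGrowRel T s T') :
    T'.numTiles = T.numTiles + ((Finset.Icc s (n : ℤ)).filter fun x =>
        spreadHt T.upper s (x + 1) = spreadHt T.upper s x + 1).card := by
  unfold DyckTiling.numTiles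
  rw [h.2.2, Finset.card_union_of_disjoint, spreadTiles,
    Finset.card_image_of_injective _ (spreadTile_injective s), Finset.card_image_of_injective]
  · intro x y hxy
    exact congrArg Prod.fst (Finset.singleton_injective hxy)
  · rw [Finset.disjoint_left]
    intro u hu hu'
    obtain ⟨t, ht, rfl⟩ := Finset.mem_image.1 hu
    obtain ⟨x, hx, hxt⟩ := Finset.mem_image.1 hu'
    have hsx := (Finset.mem_Icc.1 (Finset.mem_filter.1 hx).1).1
    have hcell : ∀ y z, (y, z) ∈ t → z + 2 ≤ T.upper.ht y := by
      intro y z hyz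
      have : (y, z) ∈ skewCells T.lower T.upper := by
        rw [← T.cover]
        exact Finset.mem_biUnion.2 ⟨t, ht, hyz⟩
      exact (Finset.mem_filter.1 this).2.2.1
    have hmem : (x, spreadHt T.upper s x) ∈ spreadTile s t := by simp [← hxt]
    rcases mem_spreadTile.1 hmem with ⟨h₁, -⟩ | ⟨rfl, h₂⟩ | ⟨h₁, h₂⟩
    · omega
    · have := hcell _ _ h₂
      simp [spreadHt] at this
    · have := hcell _ _ h₂
      simp [spreadHt, show ¬ (x < s) by omega, show ¬ (x = s) by omega] at this

/-- Strip-growing at column `s` increases `area + tiles` by twice the number of up steps of the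
lower path to the right of `s`. -/
lemma area_add_numTiles_eq (h : StripGrowRel T s T') (hs₁ : -n ≤ s) (hs₂ : s ≤ n) :
    ((T'.area + T'.numTiles : ℕ) : ℤ) = (T.area + T.numTiles : ℕ) + (n - s - T.lower.ht s) := by
  have h₁ := h.area_eq hs₁ hs₂
  have h₂ := h.numTiles_eq
  have h₃ := two_mul_card_strip hs₁ hs₂ T.upper
  push_cast
  rw [h₁, h₂]
  push_cast
  linarith

end StripGrowRel

namespace DyckTiling

lemma area_add_numTiles_of_order_zero (T : DyckTiling 0) : T.area + T.numTiles = 0 := by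
  have harea : T.area = 0 := by
    have h := two_mul_card_skewCells T.lower T.upper T.below
    have e₁ := T.lower.ht_of_ge (x := 0) (by simp)
    have e₂ := T.upper.ht_of_ge (x := 0) (by simp)
    simp [e₁, e₂] at h
    simp [area, h]
  have htiles : T.tiles = ∅ := by
    rw [Finset.eq_empty_iff_forall_notMem]
    intro t ht
    obtain ⟨a, b, f, hab, -, -, -, hf⟩ := T.isDyck t ht
    have : (a, f a) ∈ skewCells T.lower T.upper := by
      rw [← T.cover]
      refine Finset.mem_biUnion.2 ⟨t, ht, ?_⟩
      rw [hf]
      exact Finset.mem_image.2 ⟨a, by simpa using hab, rfl⟩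
    rw [Finset.card_eq_zero.1 harea] at this
    simp at this
  simp [harea, numTiles, htiles]

end DyckTiling

lemma card_filter_univ_succ {n : ℕ} (q : Fin (n + 1) → Prop) [DecidablePred q] :
    (Finset.univ.filter q).card =
      (Finset.univ.filter fun i : Fin n => q i.castSucc).card +
        if q (Fin.last n) then 1 else 0 := by
  rw [Finset.card_filter, Finset.card_filter, Fin.sum_univ_castSucc]

lemma wordInv_succ {n : ℕ} (w : Fin (n + 1) → ℕ) :
    wordInv w = wordInv (fun i => w i.castSucc) +
      (Finset.univ.filter fun i : Fin n => w (Fin.last n) < w i.castSucc).card := by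
  unfold wordInv
  simp only [Finset.card_filter, Fintype.sum_prod_type, Fin.sum_univ_castSucc,
    Finset.sum_add_distrib, Fin.castSucc_lt_last, Fin.not_lt.2 (Fin.le_last _),
    Fin.castSucc_lt_castSucc_iff, true_and, false_and, if_false, Finset.sum_const_zero, add_zero]

/-- The words `l` and `r` record the left and right endpoints of chords such that no endpoint of
an earlier chord lies inside a later one; `p` is the associated growth sequence. The lower path of
the tiling grown from `p` is then the path with up steps at `l` and down steps at `r`, and
`area + tiles` counts inversions of `l` twice. -/
lemma IsDTS.lower_ht_and_area_add_numTiles {n : ℕ} {p : Fin n → ℕ} {T : DyckTiling n}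
    (hT : IsDTS n p T) {l r : Fin n → ℕ} (hl : Function.Injective l) (hlr : ∀ i, l i < r i)
    (hll : ∀ i j, j < i → l i < l j → r i ≤ l j)
    (hrr : ∀ i j, j < i → l i ≤ r j → r i ≤ r j)
    (hp : ∀ i, p i = (Finset.univ.filter fun j => j < i ∧ l j < l i).card +
      (Finset.univ.filter fun j => j < i ∧ r j < l i).card) :
    (∀ t : ℕ, T.lower.ht (((Finset.univ.filter fun j => l j < t).card : ℤ) +
        (Finset.univ.filter fun j => r j < t).card - n) =
      ((Finset.univ.filter fun j => l j < t).card : ℤ) -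
        (Finset.univ.filter fun j => r j < t).card) ∧
    T.area + T.numTiles = 2 * wordInv l := by
  induction hT with
  | nil p T =>
    refine ⟨fun t => ?_, ?_⟩
    · simp [T.lower.ht_of_ge]
    · rw [T.area_add_numTiles_of_order_zero]
      simp [wordInv]
  | cons n p T T' _ hgrow ih =>
    obtain ⟨ihht, ihart⟩ := ih (l := fun i => l i.castSucc) (r := fun i => r i.castSucc)
      (hl.comp (Fin.castSucc_injective n)) (fun i => hlr _)
      (fun i j h => hll _ _ (by simpa using h)) (fun i j h => hrr _ _ (by simpa using h))
      (fun i => by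
        change p i.castSucc = _
        rw [hp, card_filter_univ_succ, card_filter_univ_succ]
        simp [Fin.not_lt.2 (Fin.le_last _)])
    set A : ℕ → ℕ := fun t => (Finset.univ.filter fun j : Fin n => l j.castSucc < t).card with hA
    set B : ℕ → ℕ := fun t => (Finset.univ.filter fun j : Fin n => r j.castSucc < t).card with hB
    set a := l (Fin.last n) with ha
    set b := r (Fin.last n) with hb
    have hA_le : ∀ t, A t ≤ n := fun t => (Finset.card_filter_le _ _).trans (by simp)
    have hB_le : ∀ t, B t ≤ n := fun t => (Finset.card_filter_le _ _).trans (by simp)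
    have hA_mono : Monotone A := fun t u htu =>
      Finset.card_le_card (Finset.monotone_filter_right _ fun _ _ h => lt_of_lt_of_le h htu)
    have hB_mono : Monotone B := fun t u htu =>
      Finset.card_le_card (Finset.monotone_filter_right _ fun _ _ h => lt_of_lt_of_le h htu)
    have hp_last : p (Fin.last n) = A a + B a := by
      rw [hp, card_filter_univ_succ, card_filter_univ_succ]
      simp [hA, hB, ha, Fin.castSucc_lt_last]
    have hAin : ∀ t, a < t → t ≤ b → A t = A a := by
      intro t h₁ h₂
      refine congrArg Finset.card (Finset.filter_congr fun j _ => ?_)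
      have := hll (Fin.last n) j.castSucc (Fin.castSucc_lt_last j)
      have hne : l j.castSucc ≠ a := fun h => (Fin.castSucc_lt_last j).ne (hl h)
      omega
    have hBin : ∀ t, a < t → t ≤ b → B t = B a := by
      intro t h₁ h₂
      refine congrArg Finset.card (Finset.filter_congr fun j _ => ?_)
      have := hrr (Fin.last n) j.castSucc (Fin.castSucc_lt_last j)
      omega
    have hht : ∀ t, T.lower.ht ((A t : ℤ) + B t - n) = (A t : ℤ) - B t := ihht
    have hab : a < b := hlr _
    rw [hp_last] at hgrow
    refine ⟨fun t => ?_, ?_⟩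
    · rw [card_filter_univ_succ, card_filter_univ_succ, hgrow.1]
      change spreadHt _ _ (((A t + if a < t then 1 else 0 : ℕ) : ℤ) +
        ((B t + if b < t then 1 else 0 : ℕ) : ℤ) - _) = ((A t + if a < t then 1 else 0 : ℕ) : ℤ) -
          ((B t + if b < t then 1 else 0 : ℕ) : ℤ)
      unfold spreadHt
      rcases le_or_gt t a with h | h
      · have h₁ := hA_mono h
        have h₂ := hB_mono h
        rw [if_neg (show ¬ a < t by omega), if_neg (show ¬ b < t by omega),
          if_pos (by push_cast; omega)]
        convert hht t using 2 <;> push_cast <;> ring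
      rcases le_or_gt t b with h' | h'
      · rw [if_pos h, if_neg (show ¬ b < t by omega), hAin t h h', hBin t h h',
          if_neg (by push_cast; omega), if_pos (by push_cast; ring)]
        push_cast
        rw [hht a]
        ring
      · have h₁ := hA_mono h.le
        have h₂ := hB_mono h.le
        rw [if_pos h, if_pos h', if_neg (by push_cast; omega), if_neg (by push_cast; omega)]
        push_cast
        rw [add_sub_add_right_eq_sub, ← hht t]
        congr 1
        ring
    · have hA₁ := hA_le a
      have hB₁ := hB_le a
      have h := hgrow.area_add_numTiles_eq (by omega) (by push_cast; omega)
      push_cast at h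
      rw [hht a] at h
      have hinv := wordInv_succ l
      rw [← ha] at hinv
      have hcompl := Finset.card_filter_add_card_filter_not
        (s := (Finset.univ : Finset (Fin n))) (fun j => l j.castSucc < a)
      have hcongr : (Finset.univ.filter fun j : Fin n => ¬ l j.castSucc < a) =
          Finset.univ.filter fun j : Fin n => a < l j.castSucc := by
        refine Finset.filter_congr fun j _ => ?_
        have hne : l j.castSucc ≠ a := fun h => (Fin.castSucc_lt_last j).ne (hl h)
        omega
      rw [hcongr, Finset.card_univ, Fintype.card_fin] at hcompl
      change A a + _ = n at hcompl
      rw [hinv]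
      omega

namespace IsChord

variable {n : ℕ} {P : DyckPath n} {p q p' q' : ℕ}

lemma right_lt_of_left_lt (h : IsChord P p q) (h' : IsChord P p' q') (hp : p < p') (hq : p' < q) :
    q' < q := by
  obtain ⟨-, -, -, -, e, hm⟩ := h
  obtain ⟨-, -, -, -, e', hm'⟩ := h'
  have h₁ := hm p' hp hq.le
  by_contra! hlt
  rcases hlt.eq_or_lt with rfl | hlt
  · omega
  · have := hm' (q + 1) (by omega) (by omega)
    omega

lemma left_lt_of_right_lt (h : IsChord P p q) (h' : IsChord P p' q') (hp : p ≤ q') (hq : q' < q) :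
    p < p' := by
  have hne : p ≠ q' := by
    rintro rfl
    obtain ⟨_, hu⟩ := h.2.2.1
    obtain ⟨_, hd⟩ := h'.2.2.2.1
    simp [hu] at hd
  obtain ⟨-, -, -, -, e, hm⟩ := h
  obtain ⟨-, -, -, -, e', hm'⟩ := h'
  have h₁ := hm (q' + 1) (by omega) (by omega)
  by_contra! hle
  rcases hle.eq_or_lt with rfl | hlt
  · omega
  · have := hm' p hlt hp
    omega

end IsChord

/-- For each Dyck path `λ` of order `n` and each linear extension
`σ ∈ 𝓛(P_λ)`, `art(DTS(λ,σ)) = inv(σ)`. -/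
theorem art_DTS_eq_inv (n : ℕ) (lam : DyckPath n) (σ : Equiv.Perm (Fin n))
    (hσ : LinExt lam σ) (T : DyckTiling n) (hT : IsDTSof lam σ T) :
    T.art = permInv σ := by
  obtain ⟨C, hC, hDTS⟩ := hT
  have hnest : ∀ i j, j < i → C.l i < C.l j → C.r i ≤ C.l j := by
    intro i j hji h
    by_contra! h₂
    exact hji.asymm (C.natural j i h ((C.chord i).right_lt_of_left_lt (C.chord j) h h₂))
  have hnest_r : ∀ i j, j < i → C.l i ≤ C.r j → C.r i ≤ C.r j := by
    intro i j hji h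
    by_contra! h₂
    exact hji.asymm (C.natural j i ((C.chord i).left_lt_of_right_lt (C.chord j) h h₂) h₂)
  have key := (hDTS.lower_ht_and_area_add_numTiles C.inj (fun i => (C.chord i).1) hnest hnest_r
    fun _ => rfl).2
  have hinv : wordInv C.l = permInv σ := by
    refine congrArg Finset.card (Finset.filter_congr fun x _ => ?_)
    rw [← hC x.2 x.1]
    rfl
  rw [DyckTiling.art, key, hinv]
  omega

end
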